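/- For every dimension d ∈ ℕ and every ε > 0, there exist n ∈ ℕ and a probability vector ω ∈ ℝ^n such that for all probability vectors p, p' ∈ ℝ^d there exists a probability vector ω' ∈ ℝ^n with d(ω, ω') ≤ ε and p ⊗ ω ≻ p' ⊗ ω' (majorization of the dn-dimensional product vectors). In other words, allowing an arbitrarily small trace-distance error on an unbounded-dimension catalyst enables every state transition under noisy operations. -/

import Mathlib

open scoped BigOperators Topology
open Filter

/-- A probability vector: nonnegative entries summing to 1. -/
def IsProbVec {ι : Type*} [Fintype ι] (p : ι → ℝ) : Prop :=
  (∀ i, 0 ≤ p i) ∧ ∑ i, p i = 1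

/-- The sum of the `k` largest entries of `p`, as the supremum of sums over subsets of size `k`. -/
noncomputable def topSum {ι : Type*} [Fintype ι] (p : ι → ℝ) (k : ℕ) : ℝ :=
  sSup {x : ℝ | ∃ s : Finset ι, s.card = k ∧ x = ∑ i ∈ s, p i}

/-- `p` majorizes `p'`: for every `1 ≤ k ≤ d`, the sum of the `k` largest entries of `p`
is at least that of `p'`. -/
def Majorizes {ι : Type*} [Fintype ι] (p p' : ι → ℝ) : Prop :=
  ∀ k : ℕ, 1 ≤ k → k ≤ Fintype.card ι → topSum p' k ≤ topSum p k

/-- A column-stochastic matrix: nonnegative entries, each column sums to 1. -/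
def ColStochastic {ι κ : Type*} [Fintype ι] [Fintype κ] (Λ : Matrix ι κ ℝ) : Prop :=
  (∀ i j, 0 ≤ Λ i j) ∧ ∀ j, ∑ i, Λ i j = 1

/-- A bistochastic (doubly stochastic) matrix. -/
def Bistochastic {ι : Type*} [Fintype ι] (A : Matrix ι ι ℝ) : Prop :=
  (∀ i j, 0 ≤ A i j) ∧ (∀ i, ∑ j, A i j = 1) ∧ (∀ j, ∑ i, A i j = 1)

/-- Real power with the convention `0 ^ a = 0` (in particular `0 ^ 0 = 0`). -/
noncomputable def rpow0 (x a : ℝ) : ℝ := if x = 0 then 0 else x ^ a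

/-- The classical Rényi divergence `D_α(p‖q)`, with the conventions `0^0 = 0`, `0·ln 0 = 0`;
for `α < 0` the prefactor is `1/(1-α)`, for `α ∈ [0,1)∪(1,∞)` it is `1/(α-1)`,
and `D_1` is the Kullback–Leibler divergence. -/
noncomputable def renyiD {ι : Type*} [Fintype ι] (α : ℝ) (p q : ι → ℝ) : ℝ :=
  if α = 1 then ∑ i, p i * Real.log (p i / q i)
  else if α < 0 then (1 / (1 - α)) * Real.log (∑ i, rpow0 (p i) α * rpow0 (q i) (1 - α))
  else (1 / (α - 1)) * Real.log (∑ i, rpow0 (p i) α * rpow0 (q i) (1 - α))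

/-- The Rényi entropy `H_α(p) = (sgn α / (1-α)) ln ∑ p_i^α`, with `H_1` the Shannon entropy. -/
noncomputable def renyiH {ι : Type*} [Fintype ι] (α : ℝ) (p : ι → ℝ) : ℝ :=
  if α = 1 then -∑ i, p i * Real.log (p i)
  else ((if 0 ≤ α then (1 : ℝ) else -1) / (1 - α)) * Real.log (∑ i, rpow0 (p i) α)

/-- Trace (total variation) distance between probability vectors. -/
noncomputable def traceDist {ι : Type*} [Fintype ι] (p p' : ι → ℝ) : ℝ :=
  (1 / 2) * ∑ i, |p i - p' i|

/-- Tensor product of two vectors: `(p ⊗ r)_{(i,j)} = p_i r_j`. -/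
def tensorVec {ι κ : Type*} (p : ι → ℝ) (r : κ → ℝ) : ι × κ → ℝ :=
  fun x => p x.1 * r x.2


noncomputable def uu (D : ℕ) (j : ℕ) : ℝ := if j < D then 1 / (D : ℝ) else 0

lemma uu_nonneg (D j : ℕ) : 0 ≤ uu D j := by
  unfold uu; split_ifs <;> positivity

lemma sum_uu (D k : ℕ) : ∑ m ∈ Finset.range k, uu D m = (min k D : ℕ) / (D : ℝ) := by
  unfold uu
  rw [← Finset.sum_filter, Finset.sum_const]
  have : (Finset.range k).filter (fun m => m < D) = Finset.range (min k D) := by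
    ext m; simp
  rw [this, Finset.card_range, nsmul_eq_mul]; ring

lemma sum_uu_fin (D n : ℕ) (hD : 0 < D) (h : D ≤ n) : ∑ m : Fin n, uu D m = 1 := by
  rw [Fin.sum_univ_eq_sum_range (fun m => uu D m), sum_uu, min_eq_right h]
  have : (D : ℝ) ≠ 0 := by positivity
  field_simp

noncomputable def ww (d K a : ℕ) (j : ℕ) : ℝ :=
  (1 / (K : ℝ)) * ∑ l ∈ Finset.range K, uu (d ^ (l + a)) j

lemma ww_nonneg (d K a j : ℕ) : 0 ≤ ww d K a j := by
  unfold ww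
  exact mul_nonneg (by positivity) (Finset.sum_nonneg fun _ _ => uu_nonneg _ _)

lemma ww_prob (d K a : ℕ) (hd : 0 < d) (hK : 0 < K) (ha : a ≤ 1) :
    IsProbVec (fun j : Fin (d ^ K) => ww d K a j) := by
  refine ⟨fun _ => ww_nonneg _ _ _ _, ?_⟩
  simp only [ww]
  rw [← Finset.mul_sum, Finset.sum_comm, Finset.sum_congr rfl (g := fun _ => (1 : ℝ))]
  · have : (K : ℝ) ≠ 0 := by positivity
    simp [this]
  · intro l hl
    rw [Finset.mem_range] at hl
    exact sum_uu_fin _ _ (by positivity) (Nat.pow_le_pow_right hd (by omega))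

lemma ww_div (d K m : ℕ) (hd : 0 < d) : ww d K 0 (m / d) = d * ww d K 1 m := by
  have hd' : (d : ℝ) ≠ 0 := by positivity
  unfold ww
  rw [mul_left_comm, Finset.mul_sum (a := (d : ℝ))]
  congr 1
  refine Finset.sum_congr rfl fun l _ => ?_
  unfold uu
  have : m / d < d ^ (l + 0) ↔ m < d ^ (l + 1) := by
    rw [Nat.div_lt_iff_lt_mul hd, add_zero, pow_succ]
  simp only [this]
  split_ifs
  · push_cast
    rw [add_zero, pow_succ]
    field_simp
  · simp

lemma ww_dist (d K : ℕ) (hd : 0 < d) (hK : 0 < K) :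
    traceDist (fun j : Fin (d ^ K) => ww d K 0 j) (fun j : Fin (d ^ K) => ww d K 1 j)
      ≤ 1 / K := by
  unfold traceDist
  have h : ∀ j : Fin (d ^ K), |ww d K 0 j - ww d K 1 j| ≤
      (1 / (K : ℝ)) * (uu (d ^ 0) j + uu (d ^ K) j) := by
    intro j
    have : ww d K 0 j - ww d K 1 j = (1 / (K : ℝ)) * (uu (d ^ 0) j - uu (d ^ K) j) := by
      unfold ww
      rw [← mul_sub, ← Finset.sum_sub_distrib]
      congr 1
      exact Finset.sum_range_sub' (fun l => uu (d ^ l) j) K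
    rw [this, abs_mul, abs_of_nonneg (by positivity : (0 : ℝ) ≤ 1 / K)]
    refine mul_le_mul_of_nonneg_left ?_ (by positivity)
    rw [abs_le]
    have h1 := uu_nonneg (d ^ 0) j
    have h2 := uu_nonneg (d ^ K) j
    constructor <;> linarith
  have h2 := Finset.sum_le_sum (s := Finset.univ) fun j _ => h j
  rw [← Finset.mul_sum, Finset.sum_add_distrib,
    sum_uu_fin _ _ (by positivity) (Nat.pow_le_pow_right hd (by omega)),
    sum_uu_fin _ _ (by positivity) le_rfl] at h2
  linarith

lemma upper (d K k : ℕ) (hd : 0 < d) (p : Fin d → ℝ) (hp : IsProbVec p)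
    (T : Finset (Fin d × Fin (d ^ K))) (hT : T.card = k) :
    ∑ x ∈ T, p x.1 * ww d K 1 x.2 ≤ ∑ m ∈ Finset.range k, ww d K 1 m := by
  have hp1 : ∀ i, p i ≤ 1 := fun i => by
    rw [← hp.2]; exact Finset.single_le_sum (fun i _ => hp.1 i) (Finset.mem_univ i)
  simp only [ww]
  rw [← Finset.mul_sum, Finset.sum_comm]
  simp only [mul_left_comm (p _)]
  rw [← Finset.mul_sum]
  refine mul_le_mul_of_nonneg_left ?_ (by positivity)
  simp only [Finset.mul_sum]
  rw [Finset.sum_comm]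
  refine Finset.sum_le_sum fun l hl => ?_
  rw [Finset.mem_range] at hl
  have hD : 0 < d ^ (l + 1) := by positivity
  have hDn : d ^ (l + 1) ≤ d ^ K := Nat.pow_le_pow_right hd (by omega)
  generalize d ^ (l + 1) = D at *
  have hD' : (0 : ℝ) < D := by exact_mod_cast hD
  rw [sum_uu]
  rcases le_total k D with h | h
  · rw [min_eq_left h]
    calc _ ≤ ∑ x ∈ T, 1 / (D : ℝ) := by
          refine Finset.sum_le_sum fun x _ => ?_
          have : uu D x.2 ≤ 1 / D := by
            unfold uu; split_ifs
            · exact le_rfl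
            · positivity
          calc _ ≤ 1 * uu D x.2 := mul_le_mul_of_nonneg_right (hp1 _) (uu_nonneg _ _)
            _ ≤ _ := by linarith
      _ = _ := by rw [Finset.sum_const, hT, nsmul_eq_mul]; ring
  · rw [min_eq_right h, div_self hD'.ne']
    calc _ ≤ ∑ x : Fin d × Fin (d ^ K), p x.1 * uu D x.2 :=
          Finset.sum_le_sum_of_subset_of_nonneg (Finset.subset_univ _)
            fun x _ _ => mul_nonneg (hp.1 _) (uu_nonneg _ _)
      _ = 1 := by
          rw [Fintype.sum_prod_type]
          simp only [← Finset.mul_sum]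
          rw [sum_uu_fin D _ hD hDn]
          simp [hp.2]

lemma lower (d K k : ℕ) (hd : 0 < d) (p : Fin d → ℝ) (hp : IsProbVec p)
    (hk : k ≤ d ^ K * d) :
    ∃ S : Finset (Fin d × Fin (d ^ K)), S.card = k ∧
      ∑ m ∈ Finset.range k, ww d K 1 m ≤ ∑ x ∈ S, p x.1 * ww d K 0 x.2 := by
  have : NeZero d := ⟨hd.ne'⟩
  let f : Fin d → Fin k → Fin d × Fin (d ^ K) := fun t m =>
    (t + (Fin.castLE hk m).modNat, (Fin.castLE hk m).divNat)
  have hf : ∀ t, Function.Injective (f t) := by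
    intro t a b hab
    simp only [f, Prod.mk.injEq, add_right_inj] at hab
    have : (finProdFinEquiv.symm (Fin.castLE hk a)) = finProdFinEquiv.symm (Fin.castLE hk b) :=
      Prod.ext hab.2 hab.1
    exact Fin.castLE_injective hk (finProdFinEquiv.symm.injective this)
  have key : ∃ t ∈ (Finset.univ : Finset (Fin d)), ∑ m ∈ Finset.range k, ww d K 1 m ≤
      ∑ m : Fin k, p (f t m).1 * ww d K 0 (f t m).2 := by
    apply Finset.exists_le_of_sum_le ⟨0, Finset.mem_univ _⟩
    apply le_of_eq
    rw [Finset.sum_const, Finset.card_univ, Fintype.card_fin, nsmul_eq_mul, Finset.mul_sum,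
      ← Fin.sum_univ_eq_sum_range (fun m => (d : ℝ) * ww d K 1 m), Finset.sum_comm]
    refine Finset.sum_congr rfl fun m _ => ?_
    simp only [f]
    rw [← Finset.sum_mul]
    have h1 : ∑ t : Fin d, p (t + (Fin.castLE hk m).modNat) = 1 := by
      rw [← hp.2]
      exact Equiv.sum_comp (Equiv.addRight (Fin.castLE hk m).modNat) p
    rw [h1, one_mul, ← ww_div d K m hd]
    simp [Fin.divNat]
  obtain ⟨t, -, ht⟩ := key
  refine ⟨Finset.univ.map ⟨f t, hf t⟩, by simp, ?_⟩
  rw [Finset.sum_map]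
  exact ht

/-- **Thermal embezzling (fully degenerate Hamiltonians).** For every dimension `d` and every
`ε > 0` there is a catalyst `ω` (of some finite dimension `n`) such that every transition
`p → p'` between `d`-dimensional probability vectors is enabled: `p ⊗ ω ≻ p' ⊗ ω'` for some
`ω'` with `d(ω, ω') ≤ ε`. -/
theorem thermal_embezzling :
    ∀ (d : ℕ) (ε : ℝ), 0 < ε →
      ∃ (n : ℕ) (ω : Fin n → ℝ), IsProbVec ω ∧
        ∀ p p' : Fin d → ℝ, IsProbVec p → IsProbVec p' →
          ∃ ω' : Fin n → ℝ, IsProbVec ω' ∧ traceDist ω ω' ≤ ε ∧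
            Majorizes (tensorVec p ω) (tensorVec p' ω') := by
  intro d ε hε
  rcases Nat.eq_zero_or_pos d with rfl | hd
  · refine ⟨1, fun _ => 1, ⟨by simp, by simp⟩, fun p p' hp _ => ?_⟩
    have := hp.2
    simp at this
  obtain ⟨K, hK⟩ := exists_nat_one_div_lt hε
  refine ⟨d ^ (K + 1), fun j => ww d (K + 1) 0 j, ww_prob _ _ _ hd (by omega) (by omega),
    fun p p' hp hp' => ⟨fun j => ww d (K + 1) 1 j, ww_prob _ _ _ hd (by omega) (by omega), ?_, ?_⟩⟩
  · refine (ww_dist d (K + 1) hd (by omega)).trans ?_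
    push_cast
    exact hK.le
  · intro k _ hk
    obtain ⟨S, hS, hle⟩ := lower d (K + 1) k hd p hp (by
      simpa [mul_comm] using hk)
    unfold topSum
    apply csSup_le
    · exact ⟨_, S, hS, rfl⟩
    · rintro x ⟨T, hT, rfl⟩
      refine ((upper d (K + 1) k hd p' hp' T hT).trans hle).trans ?_
      apply le_csSup
      · apply Set.Finite.bddAbove
        refine (Set.finite_range
          (fun s : Finset (Fin d × Fin (d ^ (K + 1))) => ∑ i ∈ s, tensorVec p
            (fun j : Fin (d ^ (K + 1)) => ww d (K + 1) 0 j) i)).subset ?_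
        rintro y ⟨s, -, rfl⟩
        exact ⟨s, rfl⟩
      · exact ⟨S, hS, rfl⟩
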